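/- The group F₂ × F₂ does not split as a nontrivial free product: there do not exist groups A and B, each having more than one element, such that F₂ × F₂ is isomorphic to the free product A ∗ B. -/

import Mathlib

/-!
For nontrivial `a` and `b` from different factors of a free product, `c = ab` has infinite order
and centralizer `⟨c⟩`. Indeed, let `w` be the reduced word of some `z ≠ 1` commuting with `c`. If
both `wc` and `cw` are reduced as written, they are the same list of letters, so `w` is a power of
`ab`; if neither is, this applies to `z⁻¹`. If exactly one is, then one side of `zc = cz` has
length `|w| + 2` and the other at most `|w| + 1`.

In a direct product of nontrivial groups, an element `(x, y)` with centralizer `⟨(x, y)⟩` has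
finite order. Neither `x` nor `y` is trivial, since otherwise a whole factor would centralize
`(x, y)`. Writing `(x, 1) = (x, y)ⁿ` and `(1, y) = (x, y)ᵐ`, we get `yⁿ = 1` and `xᵐ = 1` with `n`
and `m` nonzero, so `(x, y)ⁿᵐ = 1`.
-/

open Monoid CoprodI

universe u v

section List

variable {α : Type*}

lemma exists_eq_flatten_replicate_of_append_pair_eq {x y : α} (hxy : x ≠ y) :
    ∀ l : List α, l ++ [x, y] = [x, y] ++ l → ∃ n, l = (List.replicate n [x, y]).flatten
  | [], _ => ⟨0, rfl⟩
  | [z], h => by simp_all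
  | z :: t :: l, h => by
    simp only [List.cons_append, List.nil_append, List.cons.injEq] at h
    obtain ⟨rfl, rfl, hl⟩ := h
    obtain ⟨n, hn⟩ := exists_eq_flatten_replicate_of_append_pair_eq hxy l hl
    exact ⟨n + 1, by rw [List.replicate_succ, List.flatten_cons, ← hn]; rfl⟩

end List

section ReducedWords

variable {ι : Type*} {M : ι → Type*} [∀ i, Monoid (M i)]

lemma word_prod_injective : Function.Injective (Word.prod : Word M → CoprodI M) := by
  classical exact Word.equiv.symm.injective

lemma neWord_toList_eq_of_prod_eq {i j k l : ι} {w : NeWord M i j} {w' : NeWord M k l}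
    (h : w.prod = w'.prod) : w.toList = w'.toList :=
  congrArg Word.toList (word_prod_injective h)

lemma neWord_prod_ne_one {i j : ι} (w : NeWord M i j) : w.prod ≠ 1 := fun h ↦
  w.toList_ne_nil <| congrArg Word.toList <| word_prod_injective (a₂ := Word.empty) h

lemma exists_neWord_prod_eq_of_ne_one {z : CoprodI M} (hz : z ≠ 1) :
    ∃ (i j : ι) (w : NeWord M i j), w.prod = z := by
  classical
  obtain ⟨w, rfl⟩ := Word.equiv.symm.surjective z
  obtain ⟨i, j, w, rfl⟩ := NeWord.of_word w (by rintro rfl; exact hz rfl)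
  exact ⟨i, j, w, rfl⟩

lemma fstIdx_neWord_toWord {i j : ι} (w : NeWord M i j) : w.toWord.fstIdx = some i := by
  simp [Word.fstIdx, NeWord.toWord, NeWord.toList_head?]

lemma exists_neWord_prod_eq_pow_succ {i j : ι} (hji : j ≠ i) (w : NeWord M i j) (n : ℕ) :
    ∃ w' : NeWord M i j, w'.prod = w.prod ^ (n + 1) := by
  induction n with
  | zero => exact ⟨w, (pow_one _).symm⟩
  | succ n ih =>
    obtain ⟨w', hw'⟩ := ih
    exact ⟨w'.append hji w, by rw [NeWord.append_prod, hw', ← pow_succ]⟩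

lemma not_isOfFinOrder_neWord_prod {i j : ι} (hji : j ≠ i) (w : NeWord M i j) :
    ¬IsOfFinOrder w.prod := by
  rw [isOfFinOrder_iff_pow_eq_one]
  rintro ⟨n, hn, hwn⟩
  obtain ⟨w', hw'⟩ := exists_neWord_prod_eq_pow_succ hji w (n - 1)
  rw [Nat.sub_add_cancel hn, hwn] at hw'
  exact neWord_prod_ne_one w' hw'

section Length

variable [∀ i, DecidableEq (M i)]

lemma length_rcons {i : ι} (p : Word.Pair M i) :
    (Word.rcons p).toList.length = p.tail.toList.length + if p.head = 1 then 0 else 1 := by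
  unfold Word.rcons
  split_ifs <;> rfl

variable [DecidableEq ι]

lemma length_eq_length_equivPair_tail_add (i : ι) (w : Word M) :
    w.toList.length = (Word.equivPair i w).tail.toList.length +
      if (Word.equivPair i w).head = 1 then 0 else 1 := by
  rw [← length_rcons, ← Word.equivPair_symm, Equiv.symm_apply_apply]

lemma length_of_smul_le_length_equivPair_tail_add_one {i : ι} (m : M i) (w : Word M) :
    (of m • w).toList.length ≤ (Word.equivPair i w).tail.toList.length + 1 := by
  rw [Word.of_smul_def, length_rcons]
  split_ifs <;> simp

lemma length_of_smul_le {i : ι} (m : M i) (w : Word M) :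
    (of m • w).toList.length ≤ w.toList.length + 1 := by
  have := length_of_smul_le_length_equivPair_tail_add_one m w
  have := length_eq_length_equivPair_tail_add i w
  omega

lemma equivPair_head_ne_one {i : ι} {w : Word M} (hw : w.fstIdx = some i) :
    (Word.equivPair i w).head ≠ 1 := by
  intro h
  have tail_eq : (Word.equivPair i w).tail = w := by
    simpa [h] using Word.equivPair_head_smul_equivPair_tail (i := i) w
  exact (Word.equivPair i w).fstIdx_ne (tail_eq.symm ▸ hw)

lemma length_of_smul_le_of_fstIdx_eq {i : ι} (m : M i) {w : Word M} (hw : w.fstIdx = some i) :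
    (of m • w).toList.length ≤ w.toList.length := by
  rw [length_eq_length_equivPair_tail_add i w, if_neg (equivPair_head_ne_one hw)]
  exact length_of_smul_le_length_equivPair_tail_add_one m w

end Length

end ReducedWords

section Centralizer

variable {ι : Type*} {i j : ι}

section Monoid

variable {M : ι → Type*} [∀ i, Monoid (M i)]

/-- The reduced word `ab` on two nontrivial letters from different factors. -/
def twoLetterWord (hij : i ≠ j) {a : M i} {b : M j} (ha : a ≠ 1) (hb : b ≠ 1) : NeWord M i j :=
  .append (.singleton a ha) hij (.singleton b hb)

lemma twoLetterWord_prod (hij : i ≠ j) {a : M i} {b : M j} (ha : a ≠ 1) (hb : b ≠ 1) :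
    (twoLetterWord hij ha hb).prod = of a * of b := by
  simp [twoLetterWord]

lemma neWord_prod_eq_pow_of_commute (hij : i ≠ j) {a : M i} {b : M j} (ha : a ≠ 1) (hb : b ≠ 1)
    {k l : ι} (hjk : j ≠ k) (hli : l ≠ i) {w : NeWord M k l}
    (hw : Commute w.prod (of a * of b)) : ∃ n : ℕ, w.prod = (of a * of b) ^ n := by
  let u := twoLetterWord hij ha hb
  have prod_eq : (w.append hli u).prod = (u.append hjk w).prod := by
    simpa only [NeWord.append_prod, u, twoLetterWord_prod] using hw.eq
  have letters_ne : (⟨i, a⟩ : Σ i, M i) ≠ ⟨j, b⟩ := fun h ↦ hij (congrArg Sigma.fst h)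
  obtain ⟨n, hn⟩ := exists_eq_flatten_replicate_of_append_pair_eq letters_ne w.toList
    (neWord_toList_eq_of_prod_eq prod_eq)
  refine ⟨n, ?_⟩
  change (w.toList.map fun s ↦ of s.snd).prod = _
  simp [hn, List.map_flatten, List.prod_flatten]

lemma not_commute_neWord_prod (hij : i ≠ j) {a : M i} {b : M j} (ha : a ≠ 1) (hb : b ≠ 1)
    {l : ι} (hli : l ≠ i) (w : NeWord M j l) : ¬Commute w.prod (of a * of b) := by
  classical
  intro hw
  let u := twoLetterWord hij ha hb
  have word_eq : (w.append hli u).toWord = of a • of b • w.toWord := by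
    apply word_prod_injective
    rw [Word.prod_smul, Word.prod_smul, ← mul_assoc]
    exact NeWord.append_prod.trans (by rw [twoLetterWord_prod, hw.eq]; rfl)
  have length_eq : (w.append hli u).toWord.toList.length = w.toWord.toList.length + 2 :=
    List.length_append
  have := length_of_smul_le a (of b • w.toWord)
  have := length_of_smul_le_of_fstIdx_eq b (fstIdx_neWord_toWord w)
  rw [word_eq] at length_eq
  omega

lemma not_isOfFinOrder_of_mul_of (hij : i ≠ j) {a : M i} {b : M j} (ha : a ≠ 1) (hb : b ≠ 1) :
    ¬IsOfFinOrder (of a * of b : CoprodI M) :=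
  twoLetterWord_prod hij ha hb ▸ not_isOfFinOrder_neWord_prod hij.symm _

end Monoid

variable {M : ι → Type*} [∀ i, Group (M i)]

theorem mem_zpowers_of_commute_of_mul_of (hij : i ≠ j) {a : M i} {b : M j} (ha : a ≠ 1)
    (hb : b ≠ 1) {z : CoprodI M} (hz : Commute z (of a * of b)) :
    z ∈ Subgroup.zpowers (of a * of b) := by
  obtain rfl | hz1 := eq_or_ne z 1
  · exact one_mem _
  obtain ⟨k, l, w, rfl⟩ := exists_neWord_prod_eq_of_ne_one hz1
  by_cases hjk : j = k <;> by_cases hli : l = i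
  · subst hjk hli
    obtain ⟨n, hn⟩ := neWord_prod_eq_pow_of_commute hij ha hb hij.symm hij.symm (w := w.inv)
      (w.inv_prod ▸ hz.inv_left)
    rw [← inv_mem_iff, ← w.inv_prod, hn]
    exact Subgroup.npow_mem_zpowers _ n
  · subst hjk
    exact absurd hz (not_commute_neWord_prod hij ha hb hli w)
  · subst hli
    have inv_commute : Commute w.inv.prod (of b⁻¹ * of a⁻¹) := by
      simpa only [NeWord.inv_prod, map_inv, mul_inv_rev] using hz.inv_inv
    exact absurd inv_commute <| not_commute_neWord_prod hij.symm (inv_ne_one.mpr hb)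
      (inv_ne_one.mpr ha) (Ne.symm hjk) w.inv
  · obtain ⟨n, hn⟩ := neWord_prod_eq_pow_of_commute hij ha hb hjk hli hz
    rw [hn]
    exact Subgroup.npow_mem_zpowers _ n

end Centralizer

section DirectProduct

variable {G H : Type*} [Group G] [Group H]

lemma fst_ne_one_of_forall_commute_mem_zpowers [Nontrivial G] {g : G × H}
    (hg : ∀ z, Commute z g → z ∈ Subgroup.zpowers g) : g.1 ≠ 1 := by
  intro hx
  obtain ⟨t, ht⟩ := exists_ne (1 : G)
  obtain ⟨n, hn⟩ := hg (t, 1) (Prod.commute_iff.mpr ⟨hx ▸ .one_right t, .one_left _⟩)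
  exact ht (by simpa [hx] using (congrArg Prod.fst hn).symm)

lemma snd_ne_one_of_forall_commute_mem_zpowers [Nontrivial H] {g : G × H}
    (hg : ∀ z, Commute z g → z ∈ Subgroup.zpowers g) : g.2 ≠ 1 := by
  intro hy
  obtain ⟨t, ht⟩ := exists_ne (1 : H)
  obtain ⟨n, hn⟩ := hg (1, t) (Prod.commute_iff.mpr ⟨.one_left _, hy ▸ .one_right t⟩)
  exact ht (by simpa [hy] using (congrArg Prod.snd hn).symm)

theorem isOfFinOrder_of_forall_commute_mem_zpowers [Nontrivial G] [Nontrivial H] {g : G × H}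
    (hg : ∀ z, Commute z g → z ∈ Subgroup.zpowers g) : IsOfFinOrder g := by
  have hx := fst_ne_one_of_forall_commute_mem_zpowers hg
  have hy := snd_ne_one_of_forall_commute_mem_zpowers hg
  obtain ⟨x, y⟩ := g
  obtain ⟨n, hn⟩ := hg (x, 1) (Prod.commute_iff.mpr ⟨.refl x, .one_left y⟩)
  obtain ⟨m, hm⟩ := hg (1, y) (Prod.commute_iff.mpr ⟨.one_left x, .refl y⟩)
  obtain ⟨hxn, hyn⟩ : x ^ n = x ∧ y ^ n = 1 := Prod.mk.inj hn
  obtain ⟨hxm, hym⟩ : x ^ m = 1 ∧ y ^ m = y := Prod.mk.inj hm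
  have hn0 : n ≠ 0 := by rintro rfl; exact hx (by simpa using hxn.symm)
  have hm0 : m ≠ 0 := by rintro rfl; exact hy (by simpa using hym.symm)
  refine isOfFinOrder_iff_zpow_eq_one.mpr ⟨n * m, mul_ne_zero hn0 hm0, Prod.ext ?_ ?_⟩
  · exact (zpow_mul x n m).trans (by rw [hxn, hxm]; rfl)
  · exact (zpow_mul y n m).trans (by rw [hyn, one_zpow]; rfl)

theorem isEmpty_prod_mulEquiv_coprodI [Nontrivial G] [Nontrivial H] {ι : Type*} {M : ι → Type*}
    [∀ i, Group (M i)] {i j : ι} (hij : i ≠ j) [Nontrivial (M i)] [Nontrivial (M j)] :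
    IsEmpty (G × H ≃* CoprodI M) := by
  refine ⟨fun e ↦ ?_⟩
  obtain ⟨a, ha⟩ := exists_ne (1 : M i)
  obtain ⟨b, hb⟩ := exists_ne (1 : M j)
  have self_centralizing (z : G × H) (hz : Commute z (e.symm (of a * of b))) :
      z ∈ Subgroup.zpowers (e.symm (of a * of b)) := by
    obtain ⟨n, hn⟩ := mem_zpowers_of_commute_of_mul_of hij ha hb (z := e z)
      (by simpa only [MulEquiv.apply_symm_apply] using hz.map e)
    exact ⟨n, e.injective (by simpa only [map_zpow, MulEquiv.apply_symm_apply] using hn)⟩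
  have fin_order := isOfFinOrder_of_forall_commute_mem_zpowers self_centralizing
  exact not_isOfFinOrder_of_mul_of hij ha hb
    (by simpa using e.toMonoidHom.isOfFinOrder fin_order)

end DirectProduct

section BinaryCoproduct

/-- The family consisting of `A` and `B`, which turns the binary free product into an indexed
one. -/
def pairFamily (A B : Type u) : Bool → Type u
  | true => A
  | false => B

variable (A B : Type u) [Group A] [Group B]

instance instGroupPairFamily : ∀ i, Group (pairFamily A B i)
  | true => ‹Group A›
  | false => ‹Group B›

/-- The inclusions of `A` and `B` into their binary free product, as a family of homomorphisms. -/
def pairFamilyToCoprod : ∀ i, pairFamily A B i →* Coprod A B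
  | true => Coprod.inl
  | false => Coprod.inr

/-- The binary free product as the indexed free product of a two-member family. -/
def coprodEquivCoprodI : Coprod A B ≃* CoprodI (pairFamily A B) :=
  MonoidHom.toMulEquiv
    (Coprod.lift (of (M := pairFamily A B) (i := true)) (of (M := pairFamily A B) (i := false)))
    (CoprodI.lift (pairFamilyToCoprod A B))
    (Coprod.hom_ext rfl rfl)
    (CoprodI.ext_hom _ _ (Bool.rec rfl rfl))

end BinaryCoproduct

theorem F2_prod_F2_freely_indecomposable_general (G H : Type*) (A : Type u) (B : Type v)
    [Group G] [Group H] [Group A] [Group B]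
    [Nontrivial G] [Nontrivial H] [Nontrivial A] [Nontrivial B] :
    IsEmpty (G × H ≃* Coprod A B) := by
  let M := pairFamily (ULift.{v} A) (ULift.{u} B)
  have : Nontrivial (M true) := inferInstanceAs (Nontrivial (ULift A))
  have : Nontrivial (M false) := inferInstanceAs (Nontrivial (ULift B))
  let f : Coprod A B ≃* CoprodI M :=
    (MulEquiv.coprodCongr MulEquiv.ulift.symm MulEquiv.ulift.symm).trans (coprodEquivCoprodI _ _)
  exact ⟨fun e ↦ (isEmpty_prod_mulEquiv_coprodI Bool.false_ne_true.symm).false (e.trans f)⟩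

/-- `F₂ × F₂` does not split as a nontrivial free product. -/
theorem F2_prod_F2_freely_indecomposable :
    ∀ (A B : Type) [Group A] [Group B], Nontrivial A → Nontrivial B →
      IsEmpty ((FreeGroup (Fin 2) × FreeGroup (Fin 2)) ≃* Monoid.Coprod A B) :=
  fun A B _ _ _ _ ↦ F2_prod_F2_freely_indecomposable_general _ _ A B
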